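/- For every integer N ≥ 1, the anharmonic-oscillator Hamiltonian at its exceptional point is nilpotent of index exactly N: H_AO^N = 0 while H_AO^{N−1} ≠ 0. In particular its spectrum is fully degenerate (all N eigenvalues coincide at 0) and, for N ≥ 2, H_AO is not diagonalizable. -/

import Mathlib

/-!
Write `n = N - 1`. Conjugation by the weights `√(binom(n,k))` turns `HAO N` into the second-order
difference operator `a ↦ (n-k) (a(k+1) - a(k)) + k (a(k) - a(k-1))`. By Pascal's rule this operator
sends `k ↦ binom(n-k, q+1)` to `-(n-q)` times `k ↦ binom(n-k, q)` and annihilates constants; the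
signed factorials in `Fmat N` absorb the factors `-(n-q)`. Hence the columns of `QAO N = C · P · F`
form a single Jordan chain, `HAO N * QAO N = QAO N * Jmat N`. Reversing the rows of Pascal's matrix
makes it unitriangular, so `QAO N` is invertible and `HAO N` is similar to a single nilpotent
Jordan block.
-/

open Matrix Polynomial Finset

/-- off-diagonal coupling `√((N−1−k)(k+1))`. -/
noncomputable def gCoup (N k : ℕ) : ℝ := Real.sqrt (((N - 1 - k) * (k + 1) : ℕ))

/-- the non-Hermitian Bose–Hubbard Hamiltonian `H_BH(z)`. -/
noncomputable def HBH (N : ℕ) (z : ℂ) : Matrix (Fin N) (Fin N) ℂ :=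
  fun k l =>
    if (k : ℕ) = (l : ℕ) then -Complex.I * (((N : ℤ) - 1 - 2 * (k : ℕ) : ℤ) : ℂ) * z
    else if (l : ℕ) = (k : ℕ) + 1 then (gCoup N k : ℂ)
    else if (k : ℕ) = (l : ℕ) + 1 then (gCoup N l : ℂ)
    else 0

/-- the EP limit of the discrete anharmonic-oscillator Hamiltonian `H_AO`. -/
noncomputable def HAO (N : ℕ) : Matrix (Fin N) (Fin N) ℂ :=
  fun k l =>
    if (k : ℕ) = (l : ℕ) then -(((N : ℤ) - 1 - 2 * (k : ℕ) : ℤ) : ℂ)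
    else if (l : ℕ) = (k : ℕ) + 1 then (gCoup N k : ℂ)
    else if (k : ℕ) = (l : ℕ) + 1 then -(gCoup N l : ℂ)
    else 0

/-- the nilpotent Jordan block `J`. -/
noncomputable def Jmat (N : ℕ) : Matrix (Fin N) (Fin N) ℂ :=
  fun k l => if (l : ℕ) = (k : ℕ) + 1 then 1 else 0

/-- the Pascal-triangle matrix `P`. -/
noncomputable def Pmat (N : ℕ) : Matrix (Fin N) (Fin N) ℂ :=
  fun m q => ((N - 1 - (m : ℕ)).choose (q : ℕ) : ℂ)

/-- the diagonal factor `D` with `D_{k,k} = i^k·√(binom(N−1,k))`. -/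
noncomputable def Dmat (N : ℕ) : Matrix (Fin N) (Fin N) ℂ :=
  Matrix.diagonal fun k => Complex.I ^ (k : ℕ) * (Real.sqrt ((N - 1).choose (k : ℕ)) : ℂ)

/-- the diagonal factor `G` with `G_{k,k} = (−i)^{N−1−k}·(N−1−k)!`. -/
noncomputable def Gmat (N : ℕ) : Matrix (Fin N) (Fin N) ℂ :=
  Matrix.diagonal fun k => (-Complex.I) ^ (N - 1 - (k : ℕ)) * ((N - 1 - (k : ℕ)).factorial : ℂ)

/-- the Bose–Hubbard transition matrix `Q_BH = D·P·G`. -/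
noncomputable def QBH (N : ℕ) : Matrix (Fin N) (Fin N) ℂ := Dmat N * Pmat N * Gmat N

/-- the diagonal factor `C` with `C_{k,k} = √(binom(N−1,k))`. -/
noncomputable def Cmat (N : ℕ) : Matrix (Fin N) (Fin N) ℂ :=
  Matrix.diagonal fun k => (Real.sqrt ((N - 1).choose (k : ℕ)) : ℂ)

/-- the diagonal factor `F` with `F_{k,k} = (−1)^{N−1−k}·(N−1−k)!`. -/
noncomputable def Fmat (N : ℕ) : Matrix (Fin N) (Fin N) ℂ :=
  Matrix.diagonal fun k => (-1 : ℂ) ^ (N - 1 - (k : ℕ)) * ((N - 1 - (k : ℕ)).factorial : ℂ)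

/-- the anharmonic-oscillator transition matrix `Q_AO = C·P·F`. -/
noncomputable def QAO (N : ℕ) : Matrix (Fin N) (Fin N) ℂ := Cmat N * Pmat N * Fmat N

/-- `β = −1 + i`. -/
noncomputable def betaC : ℂ := -1 + Complex.I

/-- the diagonal factor `B` with `B_{k,k} = (−β)^{−k}`. -/
noncomputable def Bmat (N : ℕ) : Matrix (Fin N) (Fin N) ℂ :=
  Matrix.diagonal fun k => ((-betaC) ^ (k : ℕ))⁻¹

/-- the diagonal factor `A` with `A_{k,k} = β^k`. -/
noncomputable def Amat (N : ℕ) : Matrix (Fin N) (Fin N) ℂ :=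
  Matrix.diagonal fun k => betaC ^ (k : ℕ)

/-- the upper-triangular real matrix `R` with
`R_{n,n+q} = √(binom(n+q,n)·binom(N−1−n,q))`. -/
noncomputable def Rmat (N : ℕ) : Matrix (Fin N) (Fin N) ℂ :=
  fun n k =>
    if (n : ℕ) ≤ (k : ℕ) then
      (Real.sqrt (((k : ℕ).choose (n : ℕ)) * ((N - 1 - (n : ℕ)).choose ((k : ℕ) - (n : ℕ)))) : ℂ)
    else 0

/-- the transition-matrix product `S = B·R·A`. -/
noncomputable def Smat (N : ℕ) : Matrix (Fin N) (Fin N) ℂ := Bmat N * Rmat N * Amat N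

/-- the discrete anharmonic-oscillator Hamiltonian `H_AO(γ)` with coupling parameter `γ`. -/
noncomputable def HAOg (N : ℕ) (γ : ℝ) : Matrix (Fin N) (Fin N) ℝ :=
  fun k l =>
    if (k : ℕ) = (l : ℕ) then -((N : ℝ) - 1 - 2 * (k : ℕ))
    else if (l : ℕ) = (k : ℕ) + 1 then
      Real.sqrt ((((N - 1 - (k : ℕ)) * ((k : ℕ) + 1) : ℕ)) * (1 - γ))
    else if (k : ℕ) = (l : ℕ) + 1 then
      -Real.sqrt ((((N - 1 - (l : ℕ)) * ((l : ℕ) + 1) : ℕ)) * (1 - γ))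
    else 0

/-- the exchange (parity) matrix `Π`. -/
noncomputable def PiMat (N : ℕ) : Matrix (Fin N) (Fin N) ℂ :=
  fun k l => if (k : ℕ) + (l : ℕ) = N - 1 then 1 else 0

section General

lemma pow_eq_zero_iff_of_semiconjBy {M : Type*} [MonoidWithZero M] {u a b : M} (hu : IsUnit u)
    (h : SemiconjBy u a b) (j : ℕ) : a ^ j = 0 ↔ b ^ j = 0 := by
  rw [← hu.mul_right_eq_zero, (h.pow_right j).eq, hu.mul_left_eq_zero]

lemma spectrum_eq_singleton_zero_of_isNilpotent {K A : Type*} [Field K] [Ring A] [Algebra K A]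
    [Nontrivial A] {a : A} (ha : IsNilpotent a) : spectrum K a = {0} := by
  refine Set.Subset.antisymm (fun μ hμ => ?_) ?_
  · obtain ⟨j, hj⟩ := ha
    have hμj : μ ^ j ∈ spectrum K (0 : A) := hj ▸ spectrum.pow_mem_pow a j hμ
    rw [spectrum.zero_eq] at hμj
    exact eq_zero_of_pow_eq_zero hμj
  · exact Set.singleton_subset_iff.2 <|
      spectrum.zero_mem_iff K |>.2 fun hu => hu.not_isNilpotent ha

lemma eq_zero_of_isNilpotent_of_eq_conj_diagonal {ι R : Type*} [Fintype ι] [DecidableEq ι]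
    [CommRing R] [IsReduced R] {A T : Matrix ι ι R} {d : ι → R} (hA : IsNilpotent A)
    (hT : IsUnit T) (h : A = T * diagonal d * T⁻¹) : A = 0 := by
  obtain ⟨j, hj⟩ := hA
  have hsemi : SemiconjBy T (diagonal d) A := by
    rw [SemiconjBy, h, nonsing_inv_mul_cancel_right T _ ((isUnit_iff_isUnit_det T).1 hT)]
  have hdj : diagonal d ^ j = 0 := (pow_eq_zero_iff_of_semiconjBy hT hsemi j).2 hj
  have hd : d = 0 := by
    rw [diagonal_pow, diagonal_eq_zero] at hdj
    exact eq_zero_of_pow_eq_zero hdj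
  rw [h, hd, diagonal_zero', Matrix.mul_zero, Matrix.zero_mul]

lemma sqrt_mul_mul_sqrt_of_mul_eq_mul {a b x y : ℝ} (hb : 0 ≤ b) (hx : 0 ≤ x)
    (h : a * x = b * y) : √(a * b) * √x = b * √y := by
  have hsq : a * b * x = b ^ 2 * y := by linear_combination b * h
  rw [← Real.sqrt_mul' _ hx, hsq, Real.sqrt_mul (sq_nonneg b), Real.sqrt_sq hb]

lemma mul_choose_pred_sub_choose {R : Type*} [CommRing R] (m q : ℕ) :
    (m : R) * ((m - 1).choose (q + 1) - m.choose (q + 1)) = -((m - q) * m.choose q) := by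
  rcases m with _ | m
  · rcases q with _ | q <;> simp
  have hpascal : ((m + 1).choose (q + 1) : R) = m.choose q + m.choose (q + 1) :=
    mod_cast congrArg (Nat.cast (R := R)) (Nat.choose_succ_succ' m q)
  have habsorb : (m.choose q : R) * (m + 1) = (m + 1).choose q * (m + 1 - q) := by
    rcases le_or_gt q (m + 1) with hq | hq
    · have := congrArg (Nat.cast (R := R)) (Nat.choose_mul_succ_eq m q)
      push_cast [Nat.cast_sub hq] at this
      exact this
    · simp [Nat.choose_eq_zero_of_lt hq, Nat.choose_eq_zero_of_lt (show m < q by omega)]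
  rw [Nat.add_sub_cancel]
  push_cast
  linear_combination -(m + 1 : R) * hpascal - habsorb

end General

section JordanBlock

variable {N : ℕ}

lemma Jmat_mul_apply (A : Matrix (Fin N) (Fin N) ℂ) (k l : Fin N) :
    (Jmat N * A) k l = if h : (k : ℕ) + 1 < N then A ⟨k + 1, h⟩ l else 0 := by
  simp only [mul_apply, Jmat, ite_mul, one_mul, zero_mul]
  split_ifs with h
  · have hk : ∀ i : Fin N, (i : ℕ) = k + 1 ↔ i = ⟨k + 1, h⟩ := fun i => by rw [Fin.ext_iff]
    simp [hk]
  · exact Finset.sum_eq_zero fun i _ => if_neg (by omega)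

lemma mul_Jmat_apply (A : Matrix (Fin N) (Fin N) ℂ) (k l : Fin N) :
    (A * Jmat N) k l = if 0 < (l : ℕ) then A k ⟨l - 1, by omega⟩ else 0 := by
  simp only [mul_apply, Jmat, mul_ite, mul_one, mul_zero]
  split_ifs with h
  · have hl : ∀ i : Fin N, (l : ℕ) = i + 1 ↔ i = ⟨l - 1, by omega⟩ := fun i => by
      rw [Fin.ext_iff]
      grind
    simp [hl]
  · exact Finset.sum_eq_zero fun i _ => if_neg (by omega)

lemma transpose_Jmat_mul_apply (A : Matrix (Fin N) (Fin N) ℂ) (k l : Fin N) :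
    ((Jmat N)ᵀ * A) k l = if 0 < (k : ℕ) then A ⟨k - 1, by omega⟩ l else 0 := by
  rw [← transpose_transpose A, ← transpose_mul, transpose_apply, mul_Jmat_apply]
  rfl

lemma Jmat_pow_apply (j : ℕ) (k l : Fin N) :
    (Jmat N ^ j) k l = if (l : ℕ) = k + j then 1 else 0 := by
  induction j generalizing k with
  | zero => simp [one_apply, Fin.ext_iff, eq_comm]
  | succ j ih =>
    rw [pow_succ', Jmat_mul_apply]
    simp only [ih]
    grind

lemma Jmat_pow_eq_zero_iff (j : ℕ) : Jmat N ^ j = 0 ↔ N ≤ j := by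
  refine ⟨fun h => ?_, fun h => ?_⟩
  · by_contra! hj
    have hentry := congrFun₂ h ⟨0, by omega⟩ ⟨j, hj⟩
    simp [Jmat_pow_apply] at hentry
  · ext k l
    rw [Jmat_pow_apply, if_neg (by omega), Matrix.zero_apply]

end JordanBlock

section DifferenceOperator

/-- The diagonal matrix of the index `k`, multiplication by `k` on functions of `k`. -/
noncomputable def indexMat (N : ℕ) : Matrix (Fin N) (Fin N) ℂ :=
  diagonal fun k => ((k : ℕ) : ℂ)

/-- The diagonal matrix of the reversed index `N - 1 - k`. -/
noncomputable def revIndexMat (N : ℕ) : Matrix (Fin N) (Fin N) ℂ :=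
  diagonal fun k => ((N - 1 - k : ℕ) : ℂ)

/-- The difference operator `a ↦ (N-1-k) (a(k+1) - a(k)) + k (a(k) - a(k-1))` on functions of
`k < N`, which is `HAO N` freed of its square roots. The out-of-range values `a(N)` and `a(-1)`
have coefficient zero. -/
noncomputable def differenceMat (N : ℕ) : Matrix (Fin N) (Fin N) ℂ :=
  revIndexMat N * (Jmat N - 1) + indexMat N * (1 - (Jmat N)ᵀ)

variable (N : ℕ)

lemma revIndexMat_add_indexMat : revIndexMat N + indexMat N = ((N - 1 : ℕ) : ℂ) • 1 := by
  rw [revIndexMat, indexMat, diagonal_add, smul_one_eq_diagonal]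
  refine congrArg diagonal (funext fun k => ?_)
  rw [← Nat.cast_add, Nat.sub_add_cancel (Nat.le_sub_one_of_lt k.isLt)]

lemma gCoup_mul_sqrt_choose (k : ℕ) :
    gCoup N k * √((N - 1).choose k) = (k + 1 : ℕ) * √((N - 1).choose (k + 1)) := by
  rw [gCoup, Nat.cast_mul]
  refine sqrt_mul_mul_sqrt_of_mul_eq_mul (Nat.cast_nonneg _) (Nat.cast_nonneg _) ?_
  have := Nat.choose_succ_right_eq (N - 1) k
  norm_cast
  linarith

lemma gCoup_mul_sqrt_choose_succ (k : ℕ) :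
    gCoup N k * √((N - 1).choose (k + 1)) = (N - 1 - k : ℕ) * √((N - 1).choose k) := by
  rw [gCoup, mul_comm (N - 1 - k), Nat.cast_mul]
  refine sqrt_mul_mul_sqrt_of_mul_eq_mul (Nat.cast_nonneg _) (Nat.cast_nonneg _) ?_
  have := Nat.choose_succ_right_eq (N - 1) k
  norm_cast
  linarith

lemma HAO_mul_Cmat : HAO N * Cmat N = Cmat N * differenceMat N := by
  ext k l
  have hdiag : ((N - 1 - k : ℕ) : ℂ) = N - 1 - k := by
    have hk : (k : ℕ) + 1 ≤ N := k.isLt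
    rw [Nat.sub_sub, add_comm, Nat.cast_sub hk]
    push_cast
    ring
  have hsuper := congrArg Complex.ofReal (gCoup_mul_sqrt_choose_succ N k)
  have hsub := congrArg Complex.ofReal (gCoup_mul_sqrt_choose N l)
  push_cast [hdiag] at hsuper hsub
  simp only [Cmat, mul_diagonal, diagonal_mul, differenceMat, indexMat, revIndexMat, HAO, Jmat,
    Matrix.add_apply, Matrix.sub_apply, transpose_apply, one_apply, Fin.ext_iff, hdiag]
  by_cases hkl : (k : ℕ) = l
  · simp only [hkl, ↓reduceIte, Nat.left_eq_add, one_ne_zero]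
    push_cast
    ring
  by_cases hlk : (l : ℕ) = k + 1
  · have hne : (k : ℕ) ≠ k + 1 + 1 := by omega
    simp only [hlk, hne, ↓reduceIte, Nat.left_eq_add, one_ne_zero]
    linear_combination hsuper
  by_cases hkl' : (k : ℕ) = l + 1
  · have hne : (l : ℕ) ≠ l + 1 + 1 := by omega
    simp only [hkl', hne, ↓reduceIte, Nat.add_eq_left, one_ne_zero]
    push_cast
    linear_combination -hsub
  simp [hkl, hlk, hkl']

lemma revIndexMat_mul_Jmat_mul_Pmat_apply (k q : Fin N) :
    (revIndexMat N * (Jmat N * Pmat N)) k q =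
      (N - 1 - k : ℕ) * ((N - 1 - k - 1).choose q : ℂ) := by
  rw [revIndexMat, diagonal_mul, Jmat_mul_apply]
  split_ifs with h
  · simp only [Pmat, Nat.sub_sub, add_assoc]
  · simp [show N - 1 - (k : ℕ) = 0 by omega]

lemma revIndexMat_mul_Jmat_sub_one_mul_Pmat :
    revIndexMat N * ((Jmat N - 1) * Pmat N) =
      -((revIndexMat N * Pmat N - Pmat N * indexMat N) * Jmat N) := by
  ext k ⟨q, hq⟩
  rw [Matrix.sub_mul, Matrix.one_mul, Matrix.mul_sub, Matrix.sub_apply,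
    revIndexMat_mul_Jmat_mul_Pmat_apply]
  simp only [revIndexMat, indexMat, diagonal_mul, mul_diagonal, Matrix.neg_apply,
    Matrix.sub_apply, mul_Jmat_apply, Pmat]
  rcases q with _ | q
  · simp
  · have hchoose := mul_choose_pred_sub_choose (R := ℂ) (N - 1 - k) q
    simp only [Nat.succ_pos, if_true, Nat.add_sub_cancel]
    linear_combination hchoose

lemma indexMat_mul_one_sub_transpose_Jmat_mul_Pmat :
    indexMat N * ((1 - (Jmat N)ᵀ) * Pmat N) = -(indexMat N * Pmat N * Jmat N) := by
  ext ⟨k, hk⟩ ⟨q, hq⟩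
  simp only [indexMat, diagonal_mul, Matrix.neg_apply, Matrix.sub_apply, Matrix.sub_mul,
    Matrix.one_mul, mul_Jmat_apply, transpose_Jmat_mul_apply, Pmat]
  rcases k with _ | k
  · simp
  rcases q with _ | q
  · simp
  · have hrow : N - 1 - k = N - 1 - (k + 1) + 1 := by omega
    simp only [Nat.succ_pos, if_true, Nat.add_sub_cancel, hrow, Nat.choose_succ_succ']
    push_cast
    ring

lemma differenceMat_mul_Pmat :
    differenceMat N * Pmat N = -(Pmat N * (revIndexMat N * Jmat N)) := by
  have hcomm : revIndexMat N * Pmat N + indexMat N * Pmat N =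
      Pmat N * revIndexMat N + Pmat N * indexMat N := by
    rw [← Matrix.add_mul, ← Matrix.mul_add, revIndexMat_add_indexMat, Matrix.smul_mul,
      Matrix.mul_smul, Matrix.one_mul, Matrix.mul_one]
  rw [differenceMat, Matrix.add_mul, Matrix.mul_assoc, Matrix.mul_assoc,
    revIndexMat_mul_Jmat_sub_one_mul_Pmat, indexMat_mul_one_sub_transpose_Jmat_mul_Pmat,
    ← neg_add, ← Matrix.add_mul, sub_add_eq_add_sub, hcomm, add_sub_cancel_right, Matrix.mul_assoc]

lemma revIndexMat_mul_Jmat_mul_Fmat :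
    revIndexMat N * (Jmat N * Fmat N) = -(Fmat N * Jmat N) := by
  ext k l
  simp only [revIndexMat, Fmat, diagonal_mul, mul_diagonal, Jmat, Matrix.neg_apply]
  split_ifs with hlk
  · obtain ⟨m, hm⟩ : ∃ m, N - 1 - (k : ℕ) = m + 1 := ⟨N - 1 - l, by omega⟩
    have hm' : N - 1 - (l : ℕ) = m := by omega
    rw [hm, hm', Nat.factorial_succ, pow_succ]
    push_cast
    ring
  · simp

lemma HAO_mul_QAO : HAO N * QAO N = QAO N * Jmat N := by
  calc HAO N * QAO N
      = HAO N * Cmat N * Pmat N * Fmat N := by simp only [QAO, Matrix.mul_assoc]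
    _ = Cmat N * (differenceMat N * Pmat N) * Fmat N := by
      rw [HAO_mul_Cmat, Matrix.mul_assoc (Cmat N)]
    _ = -(Cmat N * Pmat N * (revIndexMat N * (Jmat N * Fmat N))) := by
      simp only [differenceMat_mul_Pmat, Matrix.mul_neg, Matrix.neg_mul, Matrix.mul_assoc]
    _ = QAO N * Jmat N := by
      rw [revIndexMat_mul_Jmat_mul_Fmat, Matrix.mul_neg, neg_neg, QAO, Matrix.mul_assoc _ (Fmat N)]

end DifferenceOperator

section Similarity

variable (N : ℕ)

lemma isUnit_Cmat : IsUnit (Cmat N) := by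
  refine isUnit_diagonal.2 <| Pi.isUnit_iff.2 fun k => isUnit_iff_ne_zero.2 ?_
  have hpos : 0 < ((N - 1).choose k : ℝ) := mod_cast Nat.choose_pos (by omega)
  exact Complex.ofReal_ne_zero.2 (Real.sqrt_pos.2 hpos).ne'

lemma isUnit_Fmat : IsUnit (Fmat N) :=
  isUnit_diagonal.2 <| Pi.isUnit_iff.2 fun k => isUnit_iff_ne_zero.2 <|
    mul_ne_zero (pow_ne_zero _ (by norm_num)) (mod_cast Nat.factorial_ne_zero _)

lemma isUnit_Pmat : IsUnit (Pmat N) := by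
  have hentry : ∀ i j : Fin N,
      (Pmat N).submatrix Fin.revPerm (Equiv.refl _) i j = ((i : ℕ).choose j : ℂ) := by
    intro i j
    have hrev : N - 1 - (Fin.rev i : ℕ) = i := by rw [Fin.val_rev]; omega
    simp only [submatrix_apply, Pmat, Fin.revPerm_apply, Equiv.refl_apply, hrev]
  have htri : ((Pmat N).submatrix Fin.revPerm (Equiv.refl _)).IsLowerTriangular := by
    intro i j hij
    have hlt : (i : ℕ) < j := OrderDual.toDual_lt_toDual.1 hij
    rw [hentry, Nat.choose_eq_zero_of_lt hlt, Nat.cast_zero]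
  rw [← isUnit_submatrix_equiv Fin.revPerm (Equiv.refl _), isUnit_iff_isUnit_det,
    det_of_isLowerTriangular _ htri]
  simp only [hentry, Nat.choose_self, Nat.cast_one, Finset.prod_const_one, isUnit_one]

lemma isUnit_QAO : IsUnit (QAO N) :=
  ((isUnit_Cmat N).mul (isUnit_Pmat N)).mul (isUnit_Fmat N)

lemma HAO_pow_eq_zero_iff (j : ℕ) : HAO N ^ j = 0 ↔ N ≤ j := by
  have hsemi : SemiconjBy (QAO N) (Jmat N) (HAO N) := (HAO_mul_QAO N).symm
  rw [← pow_eq_zero_iff_of_semiconjBy (isUnit_QAO N) hsemi, Jmat_pow_eq_zero_iff]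

lemma isNilpotent_HAO : IsNilpotent (HAO N) :=
  ⟨N, (HAO_pow_eq_zero_iff N N).2 le_rfl⟩

end Similarity

/-- the EP anharmonic-oscillator Hamiltonian is nilpotent of index
exactly `N`, its spectrum is `{0}`, and (for `N ≥ 2`) it is not diagonalizable. -/
theorem ao_ep_nilpotent (N : ℕ) (hN : 1 ≤ N) :
    HAO N ^ N = 0 ∧ HAO N ^ (N - 1) ≠ 0 ∧
      spectrum ℂ (HAO N) = {0} ∧
      (2 ≤ N →
        ¬ ∃ (T : Matrix (Fin N) (Fin N) ℂ) (d : Fin N → ℂ),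
          IsUnit T ∧ HAO N = T * Matrix.diagonal d * T⁻¹) := by
  have : NeZero N := ⟨by omega⟩
  refine ⟨(HAO_pow_eq_zero_iff N N).2 le_rfl, fun h => ?_,
    spectrum_eq_singleton_zero_of_isNilpotent (isNilpotent_HAO N), ?_⟩
  · exact absurd ((HAO_pow_eq_zero_iff N (N - 1)).1 h) (by omega)
  · rintro hN2 ⟨T, d, hT, hconj⟩
    have hzero : HAO N = 0 :=
      eq_zero_of_isNilpotent_of_eq_conj_diagonal (isNilpotent_HAO N) hT hconj
    have hN1 : N ≤ 1 := (HAO_pow_eq_zero_iff N 1).1 (by rw [hzero, pow_one])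
    omega
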